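/- arXiv:1507.00369 — 5 statements merged into one kernel-verified Lean document; each statement's English description precedes it below -/
import Mathlib

section
/- Let a be a nonzero natural number. Suppose that for every natural number k there exists r ∈ R_a such that ak + r is not of the form 4^s(8t+7) for any natural numbers s, t. Then every natural number N can be written as the sum of three terms of the sequence (⌊n²/a⌋)_{n∈ℕ}, i.e., there exist natural numbers A, B, C with N = ⌊A²/a⌋ + ⌊B²/a⌋ + ⌊C²/a⌋. -/
/-- `Q a` is the set of nonzero quadratic residues modulo `a`. -/
def Qres (a : ℕ) : Set ℕ :=
  {φ | 0 < φ ∧ φ < a ∧ ∃ x : ℤ, (φ : ℤ) ≡ x ^ 2 [ZMOD (a : ℤ)]}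

/-- `Ares a` is the set of naturals writable as a sum of three elements of `Q a ∪ {0}`. -/
def Ares (a : ℕ) : Set ℕ :=
  {φ | ∃ x ∈ Qres a ∪ {0}, ∃ y ∈ Qres a ∪ {0}, ∃ z ∈ Qres a ∪ {0}, φ = x + y + z}

/-- `Rres a` is the set of elements of `Ares a` that are unique in their residue class mod `a`. -/
def Rres (a : ℕ) : Set ℕ :=
  {φ | φ ∈ Ares a ∧ ∀ ψ ∈ Ares a, ψ ≡ φ [MOD a] → ψ = φ}

theorem center_red (f a : ℤ) (ha : 0 < a) :
    ∃ k : ℤ, 2 * (f + k * a) ≤ a ∧ -a ≤ 2 * (f + k * a) := by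
  have h1 := Int.emod_add_mul_ediv (2 * f + a) (2 * a)
  have h2 := Int.emod_lt_of_pos (2 * f + a) (b := 2 * a) (by omega)
  have h3 := Int.emod_nonneg (2 * f + a) (b := 2 * a) (by omega)
  refine ⟨-((2 * f + a) / (2 * a)), ?_, ?_⟩
  · linarith
  · linarith

/-- Lagrange reduction of a positive binary form. -/
theorem bin_red (m : ℕ) : ∀ A B C : ℤ, A.toNat = m → 0 < A → 0 < A * C - B ^ 2 →
    ∃ p q r s : ℤ, p * s - q * r = 1 ∧ 0 < A * p ^ 2 + 2 * B * p * r + C * r ^ 2 ∧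
      3 * (A * p ^ 2 + 2 * B * p * r + C * r ^ 2) ^ 2 ≤ 4 * (A * C - B ^ 2) := by
  induction m using Nat.strong_induction_on with
  | _ m ih =>
    intro A B C hm hA hD
    obtain ⟨k, hk1, hk2⟩ := center_red B A hA
    -- x = x' + k y'
    set B' := B + k * A with hB'
    set C' := A * k ^ 2 + 2 * B * k + C with hC'
    have hD' : A * C' - B' ^ 2 = A * C - B ^ 2 := by rw [hB', hC']; ring
    have hB2 : 4 * B' ^ 2 ≤ A ^ 2 := by nlinarith
    have hC'0 : 0 < C' := by
      by_contra hc
      nlinarith [sq_nonneg B']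
    by_cases hlt : C' < A
    · obtain ⟨p, q, r, s, h1, h2, h3⟩ := ih C'.toNat (by omega) C' (-B') A rfl hC'0 (by nlinarith)
      -- x' = -r.. , y' = p
      have e : A * (k * p - r) ^ 2 + 2 * B * (k * p - r) * p + C * p ^ 2 =
          C' * p ^ 2 + 2 * (-B') * p * r + A * r ^ 2 := by rw [hB', hC']; ring
      refine ⟨k * p - r, k * q - s, p, q, by linarith, ?_, ?_⟩
      · rw [e]; exact h2
      · rw [e]; refine h3.trans (le_of_eq ?_); rw [← hD']; ring
    · refine ⟨1, 0, 0, 1, by norm_num, by simpa using hA, ?_⟩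
      push Not at hlt
      have : A * A ≤ A * C' := by nlinarith
      rw [← hD']
      nlinarith

theorem tern_bound (a b f A : ℤ) (ha : 0 < a) (ha1 : a ≠ 1) (hA : 0 < A)
    (hred : 3 * A ^ 2 ≤ 4 * a) (h : a * b - f ^ 2 = A) (hk1 : 2 * f ≤ a) (hk2 : -a ≤ 2 * f) :
    0 < b ∧ b < a := by
  have hff : 4 * f ^ 2 ≤ a ^ 2 := by nlinarith
  constructor
  · by_contra hc
    nlinarith [sq_nonneg f]
  · by_contra hc
    push Not at hc
    have h1 : a * a ≤ a * b := by nlinarith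
    have h2 : 3 * a ^ 2 ≤ 4 * A := by nlinarith
    have h4 : 2 ≤ a := by omega
    have h5 : 6 * a ≤ 4 * A := by nlinarith
    have h6 : (6 * a) * (3 * a ^ 2) ≤ (4 * A) * (4 * A) := by
      apply mul_le_mul h5 h2 (by positivity) (by positivity)
    have h7 : 4 ≤ a ^ 2 := by nlinarith
    have h8 : a * 4 ≤ a * a ^ 2 := by
      apply mul_le_mul_of_nonneg_left h7 ha.le
    linarith

/-- Values of a positive ternary form of determinant one are sums of three squares. -/
theorem tern_red (m : ℕ) : ∀ a b c d e f : ℤ, a.toNat = m → 0 < a → 0 < a * b - f ^ 2 →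
    a * b * c + 2 * d * e * f - a * d ^ 2 - b * e ^ 2 - c * f ^ 2 = 1 →
    ∀ x y z : ℤ, ∃ u v w : ℤ,
      a * x ^ 2 + b * y ^ 2 + c * z ^ 2 + 2 * d * y * z + 2 * e * x * z + 2 * f * x * y
        = u ^ 2 + v ^ 2 + w ^ 2 := by
  induction m using Nat.strong_induction_on with
  | _ m ih =>
    intro a b c d e f hm ha hab hdet x y z
    have hG : (a * b - f ^ 2) * (a * c - e ^ 2) - (a * d - e * f) ^ 2 = a := by
      linear_combination a * hdet
    obtain ⟨p, q, r, s, hps, hpos, hred⟩ :=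
      bin_red _ (a * b - f ^ 2) (a * d - e * f) (a * c - e ^ 2) rfl hab (by rw [hG]; exact ha)
    rw [hG] at hred
    set A := (a * b - f ^ 2) * p ^ 2 + 2 * (a * d - e * f) * p * r + (a * c - e ^ 2) * r ^ 2 with hA
    by_cases ha1 : a = 1
    · subst ha1
      have hA1 : A = 1 := by nlinarith
      -- G(y,z) with y = p y' + q z', z = r y' + s z'
      set B := (1 * b - f ^ 2) * p * q + (1 * d - e * f) * (p * s + q * r)
        + (1 * c - e ^ 2) * r * s with hB
      set C := (1 * b - f ^ 2) * q ^ 2 + 2 * (1 * d - e * f) * q * s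
        + (1 * c - e ^ 2) * s ^ 2 with hC
      have hABC : A * C - B ^ 2 = 1 := by
        have : A * C - B ^ 2 = ((1 * b - f ^ 2) * (1 * c - e ^ 2) - (1 * d - e * f) ^ 2)
          * (p * s - q * r) ^ 2 := by rw [hA, hB, hC]; ring
        rw [this, hG, hps]; norm_num
      -- y' = s y - q z, z' = -r y + p z
      refine ⟨x + f * y + e * z, (s * y - q * z) + B * (p * z - r * y), p * z - r * y, ?_⟩
      have hY : p * (s * y - q * z) + q * (p * z - r * y) = y := by linear_combination y * hps
      have hZ : r * (s * y - q * z) + s * (p * z - r * y) = z := by linear_combination z * hps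
      generalize s * y - q * z = Y at *
      generalize p * z - r * y = Z at *
      have hC1 : C = B ^ 2 + 1 := by rw [hA1] at hABC; linarith
      have key : (1 * b - f ^ 2) * y ^ 2 + 2 * (1 * d - e * f) * y * z + (1 * c - e ^ 2) * z ^ 2
          = A * Y ^ 2 + 2 * B * Y * Z + C * Z ^ 2 := by
        rw [hA, hB, hC, ← hY, ← hZ]; ring
      rw [hA1, hC1] at key
      linear_combination key
    · -- new coefficients after (y,z) substitution
      obtain ⟨b1, hb1⟩ : ∃ t, t = b * p ^ 2 + 2 * d * p * r + c * r ^ 2 := ⟨_, rfl⟩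
      obtain ⟨c1, hc1⟩ : ∃ t, t = b * q ^ 2 + 2 * d * q * s + c * s ^ 2 := ⟨_, rfl⟩
      obtain ⟨d1, hd1⟩ : ∃ t, t = b * p * q + d * (p * s + q * r) + c * r * s := ⟨_, rfl⟩
      obtain ⟨e1, he1⟩ : ∃ t, t = f * q + e * s := ⟨_, rfl⟩
      obtain ⟨f1, hf1⟩ : ∃ t, t = f * p + e * r := ⟨_, rfl⟩
      have hdet1 : a * b1 * c1 + 2 * d1 * e1 * f1 - a * d1 ^ 2 - b1 * e1 ^ 2 - c1 * f1 ^ 2 = 1 := by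
        have : a * b1 * c1 + 2 * d1 * e1 * f1 - a * d1 ^ 2 - b1 * e1 ^ 2 - c1 * f1 ^ 2 =
          (a * b * c + 2 * d * e * f - a * d ^ 2 - b * e ^ 2 - c * f ^ 2)
            * (p * s - q * r) ^ 2 := by
          rw [hb1, hc1, hd1, he1, hf1]; ring
        rw [this, hdet, hps]; norm_num
      have hA1 : a * b1 - f1 ^ 2 = A := by rw [hA, hb1, hf1]; ring
      obtain ⟨k, hk1, hk2⟩ := center_red f1 a ha
      obtain ⟨f2, hf2⟩ : ∃ t, t = f1 + k * a := ⟨_, rfl⟩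
      obtain ⟨b2, hb2⟩ : ∃ t, t = b1 + 2 * k * f1 + k ^ 2 * a := ⟨_, rfl⟩
      obtain ⟨d2, hd2⟩ : ∃ t, t = d1 + k * e1 := ⟨_, rfl⟩
      rw [← hf2] at hk1 hk2
      have hA2 : a * b2 - f2 ^ 2 = A := by rw [← hA1, hb2, hf2]; ring
      have hdet2 : a * b2 * c1 + 2 * d2 * e1 * f2 - a * d2 ^ 2 - b2 * e1 ^ 2 - c1 * f2 ^ 2
          = 1 := by
        rw [← hdet1, hb2, hd2, hf2]; ring
      clear_value A
      obtain ⟨hb2pos, hlt⟩ := tern_bound a b2 f2 A ha ha1 hpos hred hA2 hk1 hk2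
      -- swap the first two variables
      have hY : p * (s * y - q * z) + q * (p * z - r * y) = y := by linear_combination y * hps
      have hZ : r * (s * y - q * z) + s * (p * z - r * y) = z := by linear_combination z * hps
      generalize s * y - q * z = Y at *
      generalize p * z - r * y = Z at *
      obtain ⟨u, v, w, huvw⟩ := ih b2.toNat (by omega) b2 a c1 e1 d2 f2 rfl hb2pos
        (by linarith) (by linarith) Y (x - k * Y) Z
      refine ⟨u, v, w, ?_⟩
      rw [← huvw, hb2, hd2, hf2, hb1, hc1, hd1, he1, hf1, ← hY, ← hZ]
      ring

theorem three_of_qr (n d k b : ℤ) (hd : 0 < d) (hn : 0 < d * n - 1)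
    (hk : k ^ 2 + d = (d * n - 1) * b) : ∃ u v w : ℤ, n = u ^ 2 + v ^ 2 + w ^ 2 := by
  obtain ⟨u, v, w, h⟩ := tern_red _ (d * n - 1) b n 1 0 k rfl hn (by linarith)
    (by linear_combination (-n) * hk) 0 0 1
  exact ⟨u, v, w, by linarith⟩

theorem qr_of_jacobi (p : ℕ) (hp : p.Prime) (d : ℕ) (h : jacobiSym (-(d : ℤ)) p = 1) :
    ∃ k : ℤ, (p : ℤ) ∣ k ^ 2 + d := by
  have := Fact.mk hp
  obtain ⟨r, hr⟩ := ZMod.isSquare_of_jacobiSym_eq_one h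
  obtain ⟨k, rfl⟩ := ZMod.intCast_surjective r
  refine ⟨k, ?_⟩
  rw [← ZMod.intCast_zmod_eq_zero_iff_dvd]
  push_cast at hr ⊢
  linear_combination -hr

theorem three_two (n : ℕ) (hn : n % 4 = 2) : ∃ u v w : ℤ, (n : ℤ) = u ^ 2 + v ^ 2 + w ^ 2 := by
  have hcop : Nat.Coprime (n - 1) (4 * n) := by
    apply Nat.Coprime.mul_right
    · have : Nat.Coprime (n - 1) 2 := (Nat.coprime_two_right).2 (Nat.odd_iff.2 (by omega))
      exact Nat.Coprime.pow_right 2 this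
    · obtain ⟨m, rfl⟩ : ∃ m, n = m + 1 := ⟨n - 1, by omega⟩
      simp
  obtain ⟨p, hpgt, hp, hmod⟩ := Nat.forall_exists_prime_gt_and_modEq (4 * n) (by omega) hcop
  obtain ⟨j, hj⟩ := (Nat.modEq_iff_dvd' (by omega)).1 hmod.symm
  have hdn : p + 1 = (4 * j + 1) * n := by
    have : p = (n - 1) + 4 * n * j := by omega
    rw [this]; have : n - 1 + 1 = n := by omega
    linarith
  obtain ⟨d, hd⟩ : ∃ d, d = 4 * j + 1 := ⟨_, rfl⟩
  rw [← hd] at hdn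
  have hp4 : p % 4 = 1 := by
    have : (p + 1) % 4 = 2 := by rw [hdn, Nat.mul_mod, hn, hd]; omega
    omega
  have hd4 : d % 4 = 1 := by omega
  have hdodd : Odd d := Nat.odd_iff.2 (by omega)
  have hpodd : Odd p := Nat.odd_iff.2 (by omega)
  have hJ : jacobiSym (-(d : ℤ)) p = 1 := by
    rw [jacobiSym.neg _ hpodd, ZMod.χ₄_nat_one_mod_four hp4, one_mul,
      jacobiSym.quadratic_reciprocity_one_mod_four hd4 hpodd]
    have : jacobiSym (p : ℤ) d = jacobiSym (-1) d := by
      apply jacobiSym.mod_left'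
      apply Int.emod_emod_of_dvd _ (dvd_refl _) |>.symm.trans
      rw [Int.emod_emod_of_dvd _ (dvd_refl _)]
      apply Int.emod_eq_emod_iff_emod_sub_eq_zero.2
      apply Int.emod_eq_zero_of_dvd
      refine ⟨n, ?_⟩
      have : (p : ℤ) + 1 = d * n := by exact_mod_cast hdn
      linarith
    rw [this, jacobiSym.at_neg_one hdodd, ZMod.χ₄_nat_one_mod_four hd4]
  obtain ⟨k, b, hb⟩ := qr_of_jacobi p hp d hJ
  have e : (d : ℤ) * n - 1 = p := by
    have : (p : ℤ) + 1 = d * n := by exact_mod_cast hdn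
    linarith
  have := hp.pos
  exact three_of_qr n d k b (by omega) (by rw [e]; omega) (by rw [e]; exact hb)

theorem three_odd (n : ℕ) (hn1 : 1 < n) (hn : n % 8 = 1 ∨ n % 8 = 3 ∨ n % 8 = 5) :
    ∃ u v w : ℤ, (n : ℤ) = u ^ 2 + v ^ 2 + w ^ 2 := by
  obtain ⟨c, g, hg, hcase⟩ : ∃ c g : ℕ, c * n = 2 * g + 1 ∧
      ((n % 8 = 1 ∧ c = 3 ∧ g % 4 = 1) ∨ (n % 8 = 3 ∧ c = 1 ∧ g % 4 = 1) ∨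
       (n % 8 = 5 ∧ c = 3 ∧ g % 4 = 3)) := by
    rcases hn with h | h | h
    · exact ⟨3, (3 * n - 1) / 2, by omega, by omega⟩
    · exact ⟨1, (1 * n - 1) / 2, by omega, by omega⟩
    · exact ⟨3, (3 * n - 1) / 2, by omega, by omega⟩
  have hcop : Nat.Coprime g (4 * n) := by
    apply Nat.Coprime.mul_right
    · have : Nat.Coprime g 2 := (Nat.coprime_two_right).2 (Nat.odd_iff.2 (by omega))
      exact Nat.Coprime.pow_right 2 this
    · have : IsCoprime (g : ℤ) n := ⟨-2, c, by
        have : (c : ℤ) * n = 2 * g + 1 := by exact_mod_cast hg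
        linarith⟩
      exact Nat.isCoprime_iff_coprime.1 this
  obtain ⟨p, hpgt, hp, hmod⟩ := Nat.forall_exists_prime_gt_and_modEq g (by omega) hcop
  obtain ⟨j, hj⟩ := (Nat.modEq_iff_dvd' (by omega)).1 hmod.symm
  have hpj : p = g + 4 * n * j := by omega
  obtain ⟨d, hd⟩ : ∃ d, d = 8 * j + c := ⟨_, rfl⟩
  have hdn : 2 * p + 1 = d * n := by
    rw [hpj, hd]; linarith
  have hp4 : p % 4 = g % 4 := by
    rw [hpj, mul_assoc]; omega
  have hdn' : (2 : ℤ) * p + 1 = d * n := by exact_mod_cast hdn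
  have hdodd : Odd d := Nat.odd_iff.2 (by omega)
  have hpodd : Odd p := Nat.odd_iff.2 (by omega)
  have h2p : jacobiSym 2 d * jacobiSym (p : ℤ) d = jacobiSym (-1) d := by
    rw [← jacobiSym.mul_left]
    apply jacobiSym.mod_left'
    apply Int.emod_eq_emod_iff_emod_sub_eq_zero.2
    apply Int.emod_eq_zero_of_dvd
    exact ⟨n, by linarith⟩
  rw [jacobiSym.at_neg_one hdodd, jacobiSym.at_two hdodd] at h2p
  have hJ : jacobiSym (-(d : ℤ)) p = 1 := by
    rw [jacobiSym.neg _ hpodd]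
    rcases hcase with ⟨h1, h2, h3⟩ | ⟨h1, h2, h3⟩ | ⟨h1, h2, h3⟩
    · rw [ZMod.χ₄_nat_three_mod_four (by omega), ZMod.χ₈_nat_eq_if_mod_eight,
        if_neg (by omega), if_neg (by omega)] at h2p
      rw [ZMod.χ₄_nat_one_mod_four (by omega),
        jacobiSym.quadratic_reciprocity_one_mod_four' hdodd (by omega)]
      linarith
    · rw [ZMod.χ₄_nat_one_mod_four (by omega), ZMod.χ₈_nat_eq_if_mod_eight,
        if_neg (by omega), if_pos (by omega)] at h2p
      rw [ZMod.χ₄_nat_one_mod_four (by omega),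
        jacobiSym.quadratic_reciprocity_one_mod_four' hdodd (by omega)]
      linarith
    · rw [ZMod.χ₄_nat_three_mod_four (by omega), ZMod.χ₈_nat_eq_if_mod_eight,
        if_neg (by omega), if_neg (by omega)] at h2p
      rw [ZMod.χ₄_nat_three_mod_four (by omega),
        jacobiSym.quadratic_reciprocity_three_mod_four (by omega) (by omega)]
      linarith
  obtain ⟨k0, hk0⟩ := qr_of_jacobi p hp d hJ
  obtain ⟨k, hkodd, hk⟩ : ∃ k : ℤ, k % 2 = 1 ∧ (p : ℤ) ∣ k ^ 2 + d := by
    rcases Int.emod_two_eq_zero_or_one k0 with h | h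
    · refine ⟨k0 + p, by have := Nat.odd_iff.1 hpodd; omega, ?_⟩
      have : (k0 + p) ^ 2 + (d : ℤ) = (k0 ^ 2 + d) + p * (2 * k0 + p) := by ring
      rw [this]
      exact dvd_add hk0 (dvd_mul_right _ _)
    · exact ⟨k0, h, hk0⟩
  have h2 : (2 : ℤ) ∣ k ^ 2 + d := by
    have a1 : Odd (k ^ 2) := (Int.odd_iff.2 hkodd).pow
    have a2 : Odd (d : ℤ) := by exact_mod_cast hdodd
    exact (a1.add_odd a2).two_dvd
  have hc : IsCoprime (2 : ℤ) p := by
    have : Nat.Coprime 2 p := Nat.coprime_two_left.2 hpodd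
    exact_mod_cast Nat.isCoprime_iff_coprime.2 this
  obtain ⟨b, hb⟩ := hc.mul_dvd h2 hk
  have e : (d : ℤ) * n - 1 = 2 * p := by linarith
  have := hp.pos
  exact three_of_qr n d k b (by omega) (by rw [e]; omega) (by rw [e]; exact hb)

theorem three_squares (n : ℕ) : (∀ s t : ℕ, n ≠ 4 ^ s * (8 * t + 7)) →
    ∃ u v w : ℤ, (n : ℤ) = u ^ 2 + v ^ 2 + w ^ 2 := by
  induction n using Nat.strong_induction_on with
  | _ n ih =>
    intro h
    by_cases h0 : n = 0
    · exact ⟨0, 0, 0, by simp [h0]⟩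
    by_cases h1 : n = 1
    · exact ⟨1, 0, 0, by simp [h1]⟩
    by_cases h2 : n % 4 = 2
    · exact three_two n h2
    by_cases h4 : n % 4 = 0
    · obtain ⟨m, rfl⟩ : ∃ m, n = 4 * m := ⟨n / 4, by omega⟩
      obtain ⟨u, v, w, e⟩ := ih m (by omega) (by
        intro s t hst
        exact h (s + 1) t (by rw [hst]; ring))
      refine ⟨2 * u, 2 * v, 2 * w, ?_⟩
      push_cast
      rw [e]; ring
    have h7 : n % 8 ≠ 7 := fun h7 => h 0 (n / 8) (by omega)
    exact three_odd n (by omega) (by omega)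

theorem sq_mod_mem (a : ℕ) (ha : a ≠ 0) (A : ℕ) : A ^ 2 % a ∈ Qres a ∪ {0} := by
  by_cases h : A ^ 2 % a = 0
  · right; exact h
  · left
    refine ⟨by omega, Nat.mod_lt _ (by omega), A, ?_⟩
    push_cast
    exact Int.mod_modEq _ _

theorem stmt_0 (a : ℕ) (ha : a ≠ 0)
    (h : ∀ k : ℕ, ∃ r ∈ Rres a, ∀ s t : ℕ, a * k + r ≠ 4 ^ s * (8 * t + 7)) :
    ∀ N : ℕ, ∃ A B C : ℕ, N = A ^ 2 / a + B ^ 2 / a + C ^ 2 / a := by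
  intro N
  obtain ⟨r, ⟨-, hr⟩, hN⟩ := h N
  obtain ⟨u, v, w, e⟩ := three_squares _ hN
  refine ⟨u.natAbs, v.natAbs, w.natAbs, ?_⟩
  have e' : a * N + r = u.natAbs ^ 2 + v.natAbs ^ 2 + w.natAbs ^ 2 := by
    zify; simpa using e
  generalize u.natAbs = A at *
  generalize v.natAbs = B at *
  generalize w.natAbs = C at *
  have hA := Nat.mod_add_div (A ^ 2) a
  have hB := Nat.mod_add_div (B ^ 2) a
  have hC := Nat.mod_add_div (C ^ 2) a
  have key := hr (A ^ 2 % a + B ^ 2 % a + C ^ 2 % a)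
    ⟨_, sq_mod_mem a ha A, _, sq_mod_mem a ha B, _, sq_mod_mem a ha C, rfl⟩ (by
      have h1 : A ^ 2 % a + B ^ 2 % a + C ^ 2 % a ≡ A ^ 2 + B ^ 2 + C ^ 2 [MOD a] :=
        ((Nat.mod_modEq _ _).add (Nat.mod_modEq _ _)).add (Nat.mod_modEq _ _)
      rw [← e'] at h1
      refine h1.trans ?_
      simp [Nat.ModEq])
  apply Nat.eq_of_mul_eq_mul_left (Nat.pos_of_ne_zero ha)
  rw [mul_add, mul_add]
  omega
end

section
/- Every natural number N can be written as the sum of three terms of the sequence (⌊n²/20⌋)_{n∈ℕ}, i.e., there exist natural numbers A, B, C with N = ⌊A²/20⌋ + ⌊B²/20⌋ + ⌊C²/20⌋. -/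
lemma shift_ex (a f : ℤ) (ha : 0 < a) : ∃ t : ℤ, 4 * (f + t * a) ^ 2 ≤ a ^ 2 := by
  refine ⟨-((2 * f + a) / (2 * a)), ?_⟩
  have h1 := Int.emod_add_mul_ediv (2 * f + a) (2 * a)
  have h2 := Int.emod_nonneg (2 * f + a) (show 2 * a ≠ 0 by positivity)
  have h3 := Int.emod_lt_of_pos (2 * f + a) (show 0 < 2 * a by positivity)
  generalize (2 * f + a) / (2 * a) = q at *
  generalize (2 * f + a) % (2 * a) = r at *
  have h : 2 * (f + -q * a) = r - a := by linarith
  have : 4 * (f + -q * a) ^ 2 = (r - a) ^ 2 := by rw [← h]; ring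
  rw [this]
  nlinarith

lemma binary_red (n : ℕ) : ∀ (A B C D : ℤ), A.toNat ≤ n → 0 < A → 0 < D → A * C - B ^ 2 = D →
    ∃ p q r s : ℤ, p * s - q * r = 1 ∧ 0 < A * p ^ 2 + 2 * B * p * r + C * r ^ 2 ∧
      3 * (A * p ^ 2 + 2 * B * p * r + C * r ^ 2) ^ 2 ≤ 4 * D := by
  induction n with
  | zero => intro A B C D h hA; omega
  | succ n ih =>
    intro A B C D h hA hD hdet
    by_cases h3 : 3 * A ^ 2 ≤ 4 * D
    · exact ⟨1, 0, 0, 1, by norm_num, by simpa using hA, by simpa using h3⟩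
    · push Not at h3
      obtain ⟨t, ht⟩ := shift_ex A B hA
      have key : A * (A * t ^ 2 + 2 * B * t + C) - (B + t * A) ^ 2 = D := by
        rw [← hdet]; ring
      set C' := A * t ^ 2 + 2 * B * t + C with hC'
      have hC0 : 0 < C' := by
        have : 0 < A * C' := by nlinarith [sq_nonneg (B + t * A)]
        exact pos_of_mul_pos_right this hA.le
      have hlt : C' < A := by
        have : A * C' < A * A := by nlinarith
        exact lt_of_mul_lt_mul_left this hA.le
      obtain ⟨p, q, r, s, h1, h2, h4⟩ := ih C' (-(B + t * A)) A D (by omega) hC0 hD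
        (by rw [← key]; ring)
      have e : A * (t * p - r) ^ 2 + 2 * B * (t * p - r) * p + C * p ^ 2
          = C' * p ^ 2 + 2 * (-(B + t * A)) * p * r + A * r ^ 2 := by
        rw [hC']; ring
      refine ⟨t * p - r, t * q - s, p, q, by linear_combination h1, ?_, ?_⟩
      · rw [e]; exact h2
      · rw [e]; exact h4

lemma binary_one (A B C : ℤ) (hA : 0 < A) (hdet : A * C - B ^ 2 = 1) (y z : ℤ) :
    ∃ u v : ℤ, A * y ^ 2 + 2 * B * y * z + C * z ^ 2 = u ^ 2 + v ^ 2 := by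
  obtain ⟨p, q, r, s, h1, h2, h3⟩ := binary_red _ A B C 1 le_rfl hA one_pos hdet
  have hm : A * p ^ 2 + 2 * B * p * r + C * r ^ 2 = 1 := by nlinarith
  obtain ⟨y', hy'⟩ : ∃ y', y' = s * y - q * z := ⟨_, rfl⟩
  obtain ⟨z', hz'⟩ : ∃ z', z' = -r * y + p * z := ⟨_, rfl⟩
  have hy : y = p * y' + q * z' := by rw [hy', hz']; linear_combination (-y) * h1
  have hz : z = r * y' + s * z' := by rw [hy', hz']; linear_combination (-z) * h1
  obtain ⟨k, hk⟩ : ∃ k, k = A * p * q + B * (p * s + q * r) + C * r * s := ⟨_, rfl⟩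
  obtain ⟨l, hl⟩ : ∃ l, l = A * q ^ 2 + 2 * B * q * s + C * s ^ 2 := ⟨_, rfl⟩
  have hkl : l - k ^ 2 = 1 := by
    have : (A * p ^ 2 + 2 * B * p * r + C * r ^ 2) * l - k ^ 2
      = (A * C - B ^ 2) * (p * s - q * r) ^ 2 := by rw [hk, hl]; ring
    rw [hm, hdet, h1] at this
    linarith
  refine ⟨y' + k * z', z', ?_⟩
  have : A * y ^ 2 + 2 * B * y * z + C * z ^ 2
      = (A * p ^ 2 + 2 * B * p * r + C * r ^ 2) * y' ^ 2 + 2 * k * y' * z' + l * z' ^ 2 := by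
    rw [hy, hz, hk, hl]; ring
  rw [this, hm]
  linear_combination z' ^ 2 * hkl

lemma ternary_one (n : ℕ) : ∀ (a b c d e f : ℤ), a.toNat ≤ n → 0 < a → 0 < a * b - f ^ 2 →
    a * b * c + 2 * d * e * f - a * d ^ 2 - b * e ^ 2 - c * f ^ 2 = 1 → ∀ x y z : ℤ,
    ∃ u v w : ℤ, a * x ^ 2 + b * y ^ 2 + c * z ^ 2 + 2 * d * y * z + 2 * e * x * z + 2 * f * x * y
      = u ^ 2 + v ^ 2 + w ^ 2 := by
  induction n with
  | zero => intro a b c d e f h ha; omega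
  | succ n ih =>
    intro a b c d e f h ha hab hdet x y z
    have hD : (a * b - f ^ 2) * (a * c - e ^ 2) - (a * d - e * f) ^ 2 = a := by
      linear_combination a * hdet
    by_cases ha1 : a = 1
    · subst ha1
      obtain ⟨u, v, huv⟩ := binary_one _ _ _ hab hD y z
      refine ⟨x + f * y + e * z, u, v, ?_⟩
      linear_combination huv
    · obtain ⟨p, q, r, s, h1, h2, h3⟩ := binary_red _ _ _ _ a le_rfl hab ha hD
      obtain ⟨m, hm⟩ : ∃ m, m = (a * b - f ^ 2) * p ^ 2 + 2 * (a * d - e * f) * p * r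
        + (a * c - e ^ 2) * r ^ 2 := ⟨_, rfl⟩
      rw [← hm] at h2 h3
      obtain ⟨t, ht⟩ := shift_ex a (f * p + e * r) ha
      obtain ⟨f', hf'⟩ : ∃ f', f' = f * p + e * r + t * a := ⟨_, rfl⟩
      obtain ⟨b', hb'⟩ : ∃ b', b' = a * t ^ 2 + b * p ^ 2 + c * r ^ 2 + 2 * d * p * r
        + 2 * e * t * r + 2 * f * t * p := ⟨_, rfl⟩
      obtain ⟨c', hc'⟩ : ∃ c', c' = b * q ^ 2 + c * s ^ 2 + 2 * d * q * s := ⟨_, rfl⟩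
      obtain ⟨e', he'⟩ : ∃ e', e' = f * q + e * s := ⟨_, rfl⟩
      obtain ⟨d', hd'⟩ : ∃ d', d' = b * p * q + c * r * s + d * (p * s + q * r)
        + e * t * s + f * t * q := ⟨_, rfl⟩
      rw [← hf'] at ht
      have hm' : a * b' - f' ^ 2 = m := by rw [hb', hf', hm]; ring
      have hb0 : 0 < b' := by
        have : 0 < a * b' := by nlinarith [sq_nonneg f']
        exact pos_of_mul_pos_right this ha.le
      have hlt : b' < a := by
        by_contra hcon
        push Not at hcon
        have h5 : 3 * a ^ 2 ≤ 4 * m := by nlinarith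
        have ha2 : 2 ≤ a := by omega
        have h6 : (3 * a ^ 2) ^ 2 ≤ (4 * m) ^ 2 := pow_le_pow_left₀ (by positivity) h5 2
        have h7 : a * (27 * a ^ 3) ≤ a * 64 := by nlinarith
        have h8 := le_of_mul_le_mul_left h7 ha
        have h9 : 2 ^ 3 ≤ a ^ 3 := pow_le_pow_left₀ (by norm_num) ha2 3
        linarith
      have hdet' : b' * a * c' + 2 * e' * d' * f' - b' * e' ^ 2 - a * d' ^ 2 - c' * f' ^ 2 = 1 := by
        have : b' * a * c' + 2 * e' * d' * f' - b' * e' ^ 2 - a * d' ^ 2 - c' * f' ^ 2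
          = (a * b * c + 2 * d * e * f - a * d ^ 2 - b * e ^ 2 - c * f ^ 2)
            * (p * s - q * r) ^ 2 := by
          rw [hb', hc', he', hd', hf']; ring
        rw [this, hdet, h1]; norm_num
      obtain ⟨y', hy'⟩ : ∃ y', y' = s * y - q * z := ⟨_, rfl⟩
      obtain ⟨z', hz'⟩ : ∃ z', z' = -r * y + p * z := ⟨_, rfl⟩
      obtain ⟨x', hx'⟩ : ∃ x', x' = x - t * y' := ⟨_, rfl⟩
      have hy : y = p * y' + q * z' := by rw [hy', hz']; linear_combination (-y) * h1
      have hz : z = r * y' + s * z' := by rw [hy', hz']; linear_combination (-z) * h1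
      have hx : x = x' + t * y' := by rw [hx']; ring
      obtain ⟨u, v, w, huvw⟩ := ih b' a c' e' d' f' (by omega) hb0 (by linarith) hdet' y' x' z'
      refine ⟨u, v, w, ?_⟩
      rw [← huvw, hx, hy, hz, hb', hc', he', hd', hf']
      ring

lemma exists_b (k : ℕ) : ∃ b x p : ℤ, 0 < b ∧ 0 < p ∧ b * (8 * k + 3) - 1 = 2 * p ∧
    2 * p ∣ x ^ 2 + b := by
  have hcop : Nat.Coprime (4 * k + 1) (4 * (8 * k + 3)) := by
    apply Nat.Coprime.mul_right
    · rw [show 4 = 2 ^ 2 by norm_num]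
      apply Nat.Coprime.pow_right
      rw [Nat.coprime_two_right]
      exact ⟨2 * k, by ring⟩
    · rw [show 8 * k + 3 = 1 + (4 * k + 1) * 2 by ring]
      simp
  have : NeZero (4 * (8 * k + 3)) := ⟨by positivity⟩
  obtain ⟨p, hp1, hp, hpm⟩ := Nat.forall_exists_prime_gt_and_eq_mod
    (q := 4 * (8 * k + 3)) ((ZMod.isUnit_iff_coprime _ _).2 hcop) (4 * k + 1)
  rw [ZMod.natCast_eq_natCast_iff] at hpm
  obtain ⟨v, hv⟩ := (Nat.modEq_iff_dvd' hp1.le).1 hpm.symm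
  have hpv : p = 4 * k + 1 + 4 * (8 * k + 3) * v := by omega
  clear hv hpm
  have : Fact p.Prime := ⟨hp⟩
  have hp4 : p % 4 = 1 := by
    rw [hpv, mul_assoc]; omega
  have hpodd : Odd p := Nat.odd_iff.2 (by omega)
  obtain ⟨b, hb⟩ : ∃ b, b = 8 * v + 1 := ⟨_, rfl⟩
  have hbodd : Odd b := Nat.odd_iff.2 (by omega)
  have hbp : b * (8 * k + 3) = 2 * p + 1 := by rw [hb, hpv]; ring
  have hneg : jacobiSym (-1) b = 1 := by
    rw [jacobiSym.at_neg_one hbodd, ZMod.χ₄_nat_one_mod_four (by omega)]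
  have h2 : jacobiSym 2 b = 1 := by
    rw [jacobiSym.at_two hbodd, ZMod.χ₈_nat_eq_if_mod_eight]
    have h8 : b % 8 = 1 := by omega
    have h2 : b % 2 = 1 := by omega
    rw [h8, h2]; rfl
  have hpb : jacobiSym p b = 1 := by
    have h : jacobiSym (2 * p) b = jacobiSym (-1) b := by
      apply jacobiSym.mod_left'
      apply Int.ModEq.symm
      rw [Int.modEq_iff_dvd]
      exact ⟨8 * k + 3, by push_cast [← @Nat.cast_inj ℤ] at hbp; linarith⟩
    rw [jacobiSym.mul_left, h2, hneg, one_mul] at h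
    exact h
  have hfin : jacobiSym (-b) p = 1 := by
    rw [jacobiSym.neg _ hpodd, ZMod.χ₄_nat_one_mod_four hp4, one_mul,
      ← jacobiSym.quadratic_reciprocity_one_mod_four hp4 hbodd, hpb]
  rw [← jacobiSym.legendreSym.to_jacobiSym] at hfin
  have hsq : ∃ x : ℤ, (p : ℤ) ∣ x ^ 2 + b := by
    have h0 : ((-b : ℤ) : ZMod p) ≠ 0 := by
      intro h
      rw [(legendreSym.eq_zero_iff p _).2 h] at hfin
      norm_num at hfin
    obtain ⟨y, hy⟩ := (legendreSym.eq_one_iff p h0).1 hfin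
    obtain ⟨x, rfl⟩ := ZMod.intCast_surjective y
    refine ⟨x, ?_⟩
    rw [← ZMod.intCast_zmod_eq_zero_iff_dvd] 
    push_cast at hy ⊢
    linear_combination -hy
  have hsq2 : ∃ x : ℤ, Odd x ∧ (p : ℤ) ∣ x ^ 2 + b := by
    obtain ⟨x, hx⟩ := hsq
    rcases Int.even_or_odd x with h | h
    · refine ⟨x + p, h.add_odd (by exact_mod_cast hpodd), ?_⟩
      have : (x + p) ^ 2 + (b : ℤ) = x ^ 2 + b + p * (2 * x + p) := by ring
      rw [this]
      exact dvd_add hx (dvd_mul_right _ _)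
    · exact ⟨x, h, hx⟩
  obtain ⟨x, hxo, hx⟩ := hsq2
  refine ⟨b, x, p, by omega, by exact_mod_cast hp.pos, ?_, ?_⟩
  · have : (b : ℤ) * (8 * k + 3) = 2 * p + 1 := by exact_mod_cast hbp
    linarith
  · apply IsCoprime.mul_dvd _ _ hx
    · have : IsCoprime ((2 : ℕ) : ℤ) (p : ℤ) :=
        Nat.isCoprime_iff_coprime.2 (Nat.coprime_two_left.2 hpodd)
      exact_mod_cast this
    · exact (hxo.pow.add_odd (by exact_mod_cast hbodd)).two_dvd

lemma three_sq (k : ℕ) : ∃ u v w : ℤ, (8 * k + 3 : ℤ) = u ^ 2 + v ^ 2 + w ^ 2 := by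
  obtain ⟨b, x, p, hb, hp, hbp, a, ha⟩ := exists_b k
  have ha0 : 0 < a := by
    have : 0 < 2 * p * a := by rw [← ha]; positivity
    exact pos_of_mul_pos_right this (by positivity)
  obtain ⟨u, v, w, h⟩ := ternary_one _ a (2 * p) (8 * k + 3) 0 1 x le_rfl ha0
    (by linarith) (by linear_combination (-(8 * k + 3 : ℤ)) * ha + hbp) 0 0 1
  exact ⟨u, v, w, by linarith⟩

lemma three_sq_nat (k : ℕ) : ∃ u v w : ℕ, 8 * k + 3 = u ^ 2 + v ^ 2 + w ^ 2 := by
  obtain ⟨u, v, w, h⟩ := three_sq k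
  refine ⟨u.natAbs, v.natAbs, w.natAbs, ?_⟩
  zify
  simpa using h

lemma sq_cases (u : ℕ) : (u ^ 2 % 8 = 0 ∨ u ^ 2 % 8 = 4 ∨ u ^ 2 % 8 = 1) ∧
    (u ^ 2 % 5 = 0 ∨ u ^ 2 % 5 = 1 ∨ u ^ 2 % 5 = 4) := by
  constructor
  · have : u % 8 < 8 := Nat.mod_lt _ (by norm_num)
    rw [Nat.pow_mod]
    interval_cases u % 8 <;> simp
  · have : u % 5 < 5 := Nat.mod_lt _ (by norm_num)
    rw [Nat.pow_mod]
    interval_cases u % 5 <;> simp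

lemma sq_odd20 (m : ℕ) (h1 : m % 8 = 1) (h5 : m % 5 = 0 ∨ m % 5 = 1 ∨ m % 5 = 4) :
    m % 20 = 1 ∨ m % 20 = 5 ∨ m % 20 = 9 := by omega

theorem stmt_5 (N : ℕ) :
    ∃ A B C : ℕ, N = A ^ 2 / 20 + B ^ 2 / 20 + C ^ 2 / 20 := by
  obtain ⟨k, hk⟩ : ∃ k, 8 * k + 3 = 20 * N + 11 ∨ 8 * k + 3 = 20 * N + 15 := by
    rcases Nat.even_or_odd' N with ⟨j, h | h⟩
    · exact ⟨5 * j + 1, by omega⟩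
    · exact ⟨5 * j + 4, by omega⟩
  obtain ⟨A, B, C, h⟩ := three_sq_nat k
  refine ⟨A, B, C, ?_⟩
  obtain ⟨a8, a5⟩ := sq_cases A
  obtain ⟨b8, b5⟩ := sq_cases B
  obtain ⟨c8, c5⟩ := sq_cases C
  generalize A ^ 2 = a at *
  generalize B ^ 2 = b at *
  generalize C ^ 2 = c at *
  have h8 : a % 8 = 1 ∧ b % 8 = 1 ∧ c % 8 = 1 := by
    have h' : (a % 8 + b % 8 + c % 8) % 8 = 3 := by clear a8 b8 c8 a5 b5 c5 hk; omega
    clear a5 b5 c5 hk h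
    generalize a % 8 = a' at *
    generalize b % 8 = b' at *
    generalize c % 8 = c' at *
    rcases a8 with rfl | rfl | rfl <;> rcases b8 with rfl | rfl | rfl <;>
      rcases c8 with rfl | rfl | rfl <;> simp at h' ⊢
  have ha := sq_odd20 a h8.1 a5
  have hb := sq_odd20 b h8.2.1 b5
  have hc := sq_odd20 c h8.2.2 c5
  clear a8 a5 b8 b5 c8 c5 h8
  rcases ha with ha | ha | ha <;> rcases hb with hb | hb | hb <;>
    rcases hc with hc | hc | hc <;> omega
end

section
/- Every natural number N can be written as the sum of three terms of the sequence (⌊n²/24⌋)_{n∈ℕ}, i.e., there exist natural numbers A, B, C with N = ⌊A²/24⌋ + ⌊B²/24⌋ + ⌊C²/24⌋. -/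
theorem aux_round (a m : ℤ) (ha : 0 < a) : ∃ k : ℤ, 2 * |a * k + m| ≤ a := by
  have h1 := Int.emod_nonneg m ha.ne'
  have h2 := Int.emod_lt_of_pos m ha
  have h3 := Int.emod_add_mul_ediv m a
  by_cases h : 2 * (m % a) ≤ a
  · refine ⟨-(m / a), ?_⟩
    have : a * -(m / a) + m = m % a := by linarith
    rw [this, abs_of_nonneg h1]; exact h
  · refine ⟨-(m / a) - 1, ?_⟩
    have : a * (-(m / a) - 1) + m = m % a - a := by linarith
    rw [this, abs_of_nonpos (by linarith)]; linarith

theorem aux_sq_le (a m : ℤ) (h : 2 * |m| ≤ a) : 4 * m ^ 2 ≤ a ^ 2 := by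
  have h0 := abs_nonneg m
  have h1 := sq_abs m
  nlinarith

/-- reduction of binary forms -/
theorem aux_bin (N : ℕ) : ∀ p q r D : ℤ, p.toNat ≤ N → 0 < p → p * r - q ^ 2 = D → 0 < D →
    ∃ s t u v : ℤ, s * v - t * u = 1 ∧ 0 < p * s ^ 2 + 2 * q * s * t + r * t ^ 2 ∧
      3 * (p * s ^ 2 + 2 * q * s * t + r * t ^ 2) ^ 2 ≤ 4 * D := by
  induction N with
  | zero => intro p q r D h hp; omega
  | succ N ih =>
    intro p q r D h hp hD hD0
    obtain ⟨k, hk⟩ := aux_round p q hp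
    have hk2 := aux_sq_le _ _ hk
    set q' := p * k + q with hq'
    set r' := p * k ^ 2 + 2 * q * k + r with hr'
    have hD' : p * r' - q' ^ 2 = D := by rw [← hD, hq', hr']; ring
    by_cases hlt : r' < p
    · have hr0 : 0 < r' := by
        by_contra hc
        nlinarith [sq_nonneg q']
      obtain ⟨s, t, u, v, h1, h2, h3⟩ := ih r' (-q') p D (by omega) hr0
        (by rw [← hD']; ring) hD0
      have e : p * (k * s - t) ^ 2 + 2 * q * (k * s - t) * s + r * s ^ 2
          = r' * s ^ 2 + 2 * (-q') * s * t + p * t ^ 2 := by rw [hq', hr']; ring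
      refine ⟨k * s - t, s, k * u - v, u, ?_, ?_, ?_⟩
      · linear_combination h1
      · rw [e]; exact h2
      · rw [e]; exact h3
    · refine ⟨1, 0, 0, 1, by norm_num, by linarith, ?_⟩
      have : p * 1 ^ 2 + 2 * q * 1 * 0 + r * 0 ^ 2 = p := by ring
      rw [this]
      nlinarith

theorem aux_bin_one (p q r : ℤ) (hp : 0 < p) (h : p * r - q ^ 2 = 1) (x y : ℤ) :
    ∃ i j : ℤ, p * x ^ 2 + 2 * q * x * y + r * y ^ 2 = i ^ 2 + j ^ 2 := by
  obtain ⟨s, t, u, v, h1, h2, h3⟩ := aux_bin _ p q r 1 le_rfl hp h one_pos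
  have h4 : p * s ^ 2 + 2 * q * s * t + r * t ^ 2 = 1 := by nlinarith
  -- new basis
  set X := v * x - u * y with hX
  set Y := s * y - t * x with hY
  set m := p * s * u + q * (s * v + t * u) + r * t * v with hm
  have hx : x = s * X + u * Y := by rw [hX, hY]; linear_combination (-x) * h1
  have hy : y = t * X + v * Y := by rw [hX, hY]; linear_combination (-y) * h1
  have h5 : p * u ^ 2 + 2 * q * u * v + r * v ^ 2 = 1 + m ^ 2 := by
    have : (p * s ^ 2 + 2 * q * s * t + r * t ^ 2) * (p * u ^ 2 + 2 * q * u * v + r * v ^ 2)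
      - m ^ 2 = (p * r - q ^ 2) * (s * v - t * u) ^ 2 := by rw [hm]; ring
    rw [h4, h, h1] at this; linarith
  refine ⟨X + m * Y, Y, ?_⟩
  have : p * x ^ 2 + 2 * q * x * y + r * y ^ 2
     = (p * s ^ 2 + 2 * q * s * t + r * t ^ 2) * X ^ 2 + 2 * m * X * Y
       + (p * u ^ 2 + 2 * q * u * v + r * v ^ 2) * Y ^ 2 := by
    clear_value X Y
    subst hx hy; rw [hm]; ring
  rw [this, h4, h5]; ring

theorem aux_pos (a a' f' G : ℤ) (h2 : 0 < a) (hm : a' * a - f' ^ 2 = G) (g2 : 0 < G) : 0 < a' := by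
  by_contra hc
  nlinarith [sq_nonneg f']

theorem aux_lt (a a' f' G : ℤ) (h2 : 2 ≤ a) (hm : a' * a - f' ^ 2 = G) (hk : 4 * f' ^ 2 ≤ a ^ 2)
    (g2 : 0 < G) (g3 : 3 * G ^ 2 ≤ 4 * a) : a' < a := by
  by_contra hc
  have q0 : a * a ≤ a' * a := mul_le_mul_of_nonneg_right (by linarith) (by linarith)
  have q1 : 3 * a ^ 2 ≤ 4 * G := by linarith [pow_two a]
  have q2 : 3 * a ≤ 2 * G := by nlinarith
  have q3 : 3 * a * 6 ≤ 2 * G * (2 * G) := mul_le_mul q2 (by linarith) (by norm_num) (by linarith)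
  nlinarith

theorem aux_tern (N : ℕ) : ∀ a b c d e f : ℤ, a.toNat ≤ N → 0 < a → 0 < a * b - f ^ 2 →
    a * b * c + 2 * d * e * f - a * d ^ 2 - b * e ^ 2 - c * f ^ 2 = 1 → ∀ x y z : ℤ,
    ∃ i j k : ℤ, a * x ^ 2 + b * y ^ 2 + c * z ^ 2 + 2 * d * y * z + 2 * e * x * z + 2 * f * x * y
      = i ^ 2 + j ^ 2 + k ^ 2 := by
  induction N with
  | zero => intro a b c d e f h ha; omega
  | succ N ih =>
    intro a b c d e f h ha hG hdet x y z
    rcases (by omega : a = 1 ∨ 2 ≤ a) with h1 | h2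
    · subst h1
      obtain ⟨i, j, hij⟩ := aux_bin_one (b - f ^ 2) (d - e * f) (c - e ^ 2) (by linarith)
        (by rw [← hdet]; ring) y z
      exact ⟨x + f * y + e * z, i, j, by linear_combination hij⟩
    · obtain ⟨s, t, u, v, g1, g2, g3⟩ := aux_bin _ (a * b - f ^ 2) (a * d - f * e) (a * c - e ^ 2) a
        le_rfl hG (by linear_combination a * hdet) ha
      obtain ⟨k, hk⟩ := aux_round a (f * s + e * t) ha
      have hk2 := aux_sq_le _ _ hk
      set G := (a * b - f ^ 2) * s ^ 2 + 2 * (a * d - f * e) * s * t + (a * c - e ^ 2) * t ^ 2 with hGd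
      set f' := a * k + (f * s + e * t) with hf'
      set a' := a * k ^ 2 + b * s ^ 2 + c * t ^ 2 + 2 * d * s * t + 2 * e * k * t + 2 * f * k * s with ha'
      set c' := b * u ^ 2 + c * v ^ 2 + 2 * d * u * v with hc'
      set d' := f * u + e * v with hd'
      set e' := b * s * u + c * t * v + d * (s * v + t * u) + e * k * v + f * k * u with he'
      have hm : a' * a - f' ^ 2 = G := by rw [ha', hf', hGd]; ring
      have ha0 : 0 < a' := aux_pos a a' f' G ha hm g2
      have hlt : a' < a := aux_lt a a' f' G h2 hm hk2 g2 g3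
      have hdet' : a' * a * c' + 2 * d' * e' * f' - a' * d' ^ 2 - a * e' ^ 2 - c' * f' ^ 2 = 1 := by
        have : a' * a * c' + 2 * d' * e' * f' - a' * d' ^ 2 - a * e' ^ 2 - c' * f' ^ 2
          = (a * b * c + 2 * d * e * f - a * d ^ 2 - b * e ^ 2 - c * f ^ 2) * (s * v - t * u) ^ 2 := by
          rw [ha', hf', hc', hd', he']; ring
        rw [this, hdet, g1]; norm_num
      obtain ⟨Y, hY⟩ : ∃ Y, Y = v * y - u * z := ⟨_, rfl⟩
      obtain ⟨Z, hZ⟩ : ∃ Z, Z = s * z - t * y := ⟨_, rfl⟩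
      obtain ⟨X, hX⟩ : ∃ X, X = x - k * Y := ⟨_, rfl⟩
      have ey : y = s * Y + u * Z := by rw [hY, hZ]; linear_combination (-y) * g1
      have ez : z = t * Y + v * Z := by rw [hY, hZ]; linear_combination (-z) * g1
      have ex : x = X + k * Y := by rw [hX]; ring
      obtain ⟨i, j, l, hl⟩ := ih a' a c' d' e' f' (by omega) ha0 (by rw [hm]; exact g2) hdet' Y X Z
      refine ⟨i, j, l, ?_⟩
      rw [← hl, ex, ey, ez, ha', hf', hc', hd', he']; ring

theorem aux_three (k : ℕ) : ∃ i j l : ℤ, ((8 * k + 3 : ℕ) : ℤ) = i ^ 2 + j ^ 2 + l ^ 2 := by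
  have hcop : Nat.Coprime (4 * k + 1) (4 * (8 * k + 3)) := by
    refine Nat.Coprime.mul_right ?_ ?_
    · have : Nat.Coprime (1 + 4 * k) 4 := by simp
      rwa [add_comm] at this
    · have : 8 * k + 3 = 1 + (4 * k + 1) * 2 := by ring
      rw [this]; simp
  have : NeZero (4 * (8 * k + 3)) := ⟨by omega⟩
  obtain ⟨p, hpgt, hp, hmod⟩ := Nat.forall_exists_prime_gt_and_eq_mod
    ((ZMod.isUnit_iff_coprime _ _).2 hcop) (4 * k + 1)
  rw [ZMod.natCast_eq_natCast_iff] at hmod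
  obtain ⟨j, hj⟩ := (Nat.modEq_iff_dvd' hpgt.le).1 hmod.symm
  have hpj : p = 4 * (8 * k + 3) * j + (4 * k + 1) := by omega
  obtain ⟨d, hd⟩ : ∃ d, d = 8 * j + 1 := ⟨_, rfl⟩
  have hpd : 2 * p + 1 = d * (8 * k + 3) := by rw [hpj, hd]; ring
  have hp4 : p % 4 = 1 := by rw [hpj, mul_assoc]; omega
  have hdodd : Odd d := ⟨4 * j, by omega⟩
  have := Fact.mk hp
  have hJ : jacobiSym (-(d : ℤ)) p = 1 := by
    have hpo : Odd p := Nat.odd_iff.2 (by omega)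
    rw [jacobiSym.neg _ hpo, ZMod.χ₄_nat_one_mod_four hp4, one_mul,
      jacobiSym.quadratic_reciprocity_one_mod_four' hdodd hp4]
    have h2 : jacobiSym 2 d = 1 := by
      rw [jacobiSym.at_two hdodd, ZMod.χ₈_nat_eq_if_mod_eight]
      have : d % 8 = 1 := by omega
      simp [this]; omega
    have h3 : jacobiSym (2 * p) d = jacobiSym (-1) d := by
      apply jacobiSym.mod_left'
      apply Int.ModEq.symm
      rw [Int.modEq_iff_dvd]
      exact ⟨8 * k + 3, by have : (2 * p + 1 : ℤ) = d * (8 * k + 3) := by exact_mod_cast hpd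
                           linarith⟩
    rw [jacobiSym.mul_left, h2, one_mul] at h3
    rw [h3, jacobiSym.at_neg_one hdodd, ZMod.χ₄_nat_one_mod_four (by omega)]
  rw [← jacobiSym.legendreSym.to_jacobiSym] at hJ
  have hne : ((-(d : ℤ) : ℤ) : ZMod p) ≠ 0 := by
    intro h0
    rw [(legendreSym.eq_zero_iff p _).2 h0] at hJ
    norm_num at hJ
  obtain ⟨w, hw⟩ := (legendreSym.eq_one_iff p hne).1 hJ
  obtain ⟨w, rfl⟩ := ZMod.intCast_surjective w
  have hdiv : (p : ℤ) ∣ w ^ 2 + d := by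
    rw [← ZMod.intCast_zmod_eq_zero_iff_dvd] 
    push_cast at hw ⊢
    rw [pow_two, ← hw]; ring
  obtain ⟨w', hdiv', hodd⟩ : ∃ w' : ℤ, (p : ℤ) ∣ w' ^ 2 + d ∧ w' % 2 = 1 := by
    by_cases ho : w % 2 = 1
    · exact ⟨w, hdiv, ho⟩
    · refine ⟨w + p, ?_, by omega⟩
      have : (w + p) ^ 2 + (d : ℤ) = (w ^ 2 + d) + p * (2 * w + p) := by ring
      rw [this]; exact dvd_add hdiv (dvd_mul_right _ _)
  have h2 : (2 : ℤ) ∣ w' ^ 2 + d := by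
    obtain ⟨c, hc⟩ : ∃ c, w' = 2 * c + 1 := ⟨w' / 2, by omega⟩
    refine ⟨2 * c ^ 2 + 2 * c + 1 + 4 * j, ?_⟩
    rw [hc, hd]; push_cast; ring
  have h2p : (2 * p : ℤ) ∣ w' ^ 2 + d := by
    refine IsCoprime.mul_dvd ?_ h2 hdiv'
    exact ⟨-(p / 2 : ℤ), 1, by omega⟩
  obtain ⟨a, ha⟩ := h2p
  have hp0 : (0 : ℤ) < p := by exact_mod_cast hp.pos
  have hd0 : (0 : ℤ) < d := by omega
  have ha0 : 0 < a := by
    by_contra hc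
    nlinarith [sq_nonneg w']
  have hpdz : (2 * p + 1 : ℤ) = d * (8 * k + 3) := by exact_mod_cast hpd
  obtain ⟨i, j', l, h⟩ := aux_tern _ a (2 * p) (8 * k + 3) 0 1 w' le_rfl ha0
    (by linarith) (by linear_combination (-(8 * k + 3 : ℤ)) * ha - hpdz) 0 0 1
  exact ⟨i, j', l, by push_cast; linear_combination h⟩

theorem aux_signs (x y z : ℤ) (h : ¬ (3 ∣ x ∧ 3 ∣ y ∧ 3 ∣ z)) :
    ∃ y' z' : ℤ, y' ^ 2 = y ^ 2 ∧ z' ^ 2 = z ^ 2 ∧ ¬ 3 ∣ (x + y' + z') := by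
  by_cases h1 : (3 : ℤ) ∣ x + y + z
  · by_cases h2 : (3 : ℤ) ∣ x - y + z
    · by_cases h3 : (3 : ℤ) ∣ x + y - z
      · exact absurd ⟨by omega, by omega, by omega⟩ h
      · exact ⟨y, -z, rfl, by ring, by omega⟩
    · exact ⟨-y, z, by ring, rfl, by omega⟩
  · exact ⟨y, z, rfl, rfl, h1⟩

/-- a positive sum of three squares, with one factor 3 put back, not all divisible by 3 -/
theorem aux_no3 (M : ℕ) : ∀ x y z : ℤ, (x ^ 2 + y ^ 2 + z ^ 2).toNat ≤ M →
    0 < x ^ 2 + y ^ 2 + z ^ 2 →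
    ∃ a b c : ℤ, a ^ 2 + b ^ 2 + c ^ 2 = x ^ 2 + y ^ 2 + z ^ 2 ∧ ¬ (3 ∣ a ∧ 3 ∣ b ∧ 3 ∣ c) := by
  induction M with
  | zero => intro x y z h h0; omega
  | succ M ih =>
    intro x y z h h0
    by_cases h3 : 3 ∣ x ∧ 3 ∣ y ∧ 3 ∣ z
    · obtain ⟨⟨x, rfl⟩, ⟨y, rfl⟩, ⟨z, rfl⟩⟩ := h3
      have e : (3 * x) ^ 2 + (3 * y) ^ 2 + (3 * z) ^ 2 = 9 * (x ^ 2 + y ^ 2 + z ^ 2) := by ring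
      rw [e] at h h0 ⊢
      obtain ⟨a, b, c, h1, h2⟩ := ih x y z (by omega) (by omega)
      obtain ⟨b', c', hb, hc, h4⟩ := aux_signs a b c h2
      refine ⟨2 * a + 2 * b' - c', 2 * a - b' + 2 * c', -a + 2 * b' + 2 * c', ?_, by omega⟩
      rw [← h1, ← hb, ← hc]; ring
    · exact ⟨x, y, z, rfl, h3⟩

theorem aux_mod24 (a : ℤ) (h2 : a % 2 = 1) (h3 : a % 3 ≠ 0) : a ^ 2 % 24 = 1 := by
  have : a % 24 = 1 ∨ a % 24 = 5 ∨ a % 24 = 7 ∨ a % 24 = 11 ∨ a % 24 = 13 ∨ a % 24 = 17 ∨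
    a % 24 = 19 ∨ a % 24 = 23 := by omega
  rcases this with h | h | h | h | h | h | h | h <;> simp [pow_two, Int.mul_emod, h]

theorem aux_sq8 (a : ℤ) : (a % 2 = 1 ∧ a ^ 2 % 8 = 1) ∨ (a ^ 2 % 8 = 0) ∨ (a ^ 2 % 8 = 4) := by
  have : a % 8 = 0 ∨ a % 8 = 1 ∨ a % 8 = 2 ∨ a % 8 = 3 ∨ a % 8 = 4 ∨ a % 8 = 5 ∨
    a % 8 = 6 ∨ a % 8 = 7 := by omega
  rcases this with h | h | h | h | h | h | h | h <;> simp [pow_two, Int.mul_emod, h] <;> omega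

theorem aux_sq3 (a : ℤ) : (a % 3 = 0 ∧ a ^ 2 % 3 = 0) ∨ (a % 3 ≠ 0 ∧ a ^ 2 % 3 = 1) := by
  have : a % 3 = 0 ∨ a % 3 = 1 ∨ a % 3 = 2 := by omega
  rcases this with h | h | h <;> simp [pow_two, Int.mul_emod, h]

theorem stmt_6 (N : ℕ) :
    ∃ A B C : ℕ, N = A ^ 2 / 24 + B ^ 2 / 24 + C ^ 2 / 24 := by
  obtain ⟨i, j, l, h⟩ := aux_three (3 * N)
  obtain ⟨a, b, c, h1, h2⟩ := aux_no3 _ i j l le_rfl (by rw [← h]; positivity)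
  rw [← h] at h1
  push_cast at h1
  have a3 := aux_sq3 a
  have b3 := aux_sq3 b
  have c3 := aux_sq3 c
  have a8 := aux_sq8 a
  have b8 := aux_sq8 b
  have c8 := aux_sq8 c
  have ha := aux_mod24 a (by omega) (by omega)
  have hb := aux_mod24 b (by omega) (by omega)
  have hc := aux_mod24 c (by omega) (by omega)
  refine ⟨a.natAbs, b.natAbs, c.natAbs, ?_⟩
  zify
  simp only [sq_abs]
  omega
end

section
/- Every natural number N can be written as the sum of three terms of the sequence (⌊n²/40⌋)_{n∈ℕ}, i.e., there exist natural numbers A, B, C with N = ⌊A²/40⌋ + ⌊B²/40⌋ + ⌊C²/40⌋. -/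
theorem aux_shift (a h : ℤ) (ha : 0 < a) : ∃ t : ℤ, 4 * (h + t * a) ^ 2 ≤ a ^ 2 := by
  refine ⟨-((2 * h + a) / (2 * a)), ?_⟩
  have h1 := Int.emod_add_mul_ediv (2 * h + a) (2 * a)
  have h2 := Int.emod_nonneg (2 * h + a) (b := 2 * a) (by omega)
  have h3 := Int.emod_lt_of_pos (2 * h + a) (b := 2 * a) (by omega)
  generalize (2 * h + a) / (2 * a) = q at *
  generalize (2 * h + a) % (2 * a) = r at *
  have h4 : 2 * (h + -q * a) = r - a := by linarith
  have h5 : 4 * (h + -q * a) ^ 2 = (r - a) ^ 2 := by rw [← h4]; ring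
  rw [h5]
  nlinarith

theorem aux_binary (m : ℕ) : ∀ a b c : ℤ, a.toNat ≤ m → 0 < a → 0 < a * c - b ^ 2 →
    ∃ p q r s : ℤ, p * s - q * r = 1 ∧ 0 < a * p ^ 2 + 2 * b * p * r + c * r ^ 2 ∧
      3 * (a * p ^ 2 + 2 * b * p * r + c * r ^ 2) ^ 2 ≤ 4 * (a * c - b ^ 2) := by
  induction m with
  | zero => intro a b c h1 h2; omega
  | succ m ih =>
    intro a b c h1 ha hD
    obtain ⟨t, ht⟩ := aux_shift a b ha
    have hD' : a * (c + 2 * t * b + t ^ 2 * a) = (a * c - b ^ 2) + (b + t * a) ^ 2 := by ring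
    have hc : 0 < c + 2 * t * b + t ^ 2 * a := by
      by_contra hneg
      nlinarith [sq_nonneg (b + t * a)]
    by_cases hlt : c + 2 * t * b + t ^ 2 * a < a
    · obtain ⟨p, q, r, s, e1, e2, e3⟩ := ih (c + 2 * t * b + t ^ 2 * a) (-(b + t * a)) a
        (by omega) hc (by nlinarith)
      -- new vector : x = -r + t p , y = p
      have key : a * (t * p - r) ^ 2 + 2 * b * (t * p - r) * p + c * p ^ 2 =
          (c + 2 * t * b + t ^ 2 * a) * p ^ 2 + 2 * (-(b + t * a)) * p * r + a * r ^ 2 := by ring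
      refine ⟨t * p - r, t * q - s, p, q, by linarith, ?_, ?_⟩
      · rw [key]; exact e2
      · rw [key]
        refine e3.trans (le_of_eq ?_)
        ring
    · refine ⟨1, 0, 0, 1, by ring, by linarith, ?_⟩
      nlinarith

theorem aux_binary_one (a b c : ℤ) (ha : 0 < a) (hD : a * c - b ^ 2 = 1) (x y : ℤ) :
    ∃ u v : ℤ, a * x ^ 2 + 2 * b * x * y + c * y ^ 2 = u ^ 2 + v ^ 2 := by
  obtain ⟨p, q, r, s, e1, e2, e3⟩ := aux_binary a.toNat a b c le_rfl ha (by omega)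
  rw [hD] at e3
  have e4 : a * p ^ 2 + 2 * b * p * r + c * r ^ 2 = 1 := by nlinarith
  refine ⟨(a * p + b * r) * x + (b * p + c * r) * y, p * y - r * x, ?_⟩
  have : (a * p ^ 2 + 2 * b * p * r + c * r ^ 2) * (a * x ^ 2 + 2 * b * x * y + c * y ^ 2) =
    ((a * p + b * r) * x + (b * p + c * r) * y) ^ 2 + (a * c - b ^ 2) * (p * y - r * x) ^ 2 := by
    ring
  rw [e4, hD] at this
  linarith

set_option maxHeartbeats 1000000 in
theorem aux_ternary (m : ℕ) : ∀ a b c d e h : ℤ, a.toNat ≤ m → 0 < a → 0 < a * b - h ^ 2 →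
    a * b * c + 2 * d * e * h - a * d ^ 2 - b * e ^ 2 - c * h ^ 2 = 1 → ∀ x y z : ℤ,
    ∃ u v w : ℤ, a * x ^ 2 + b * y ^ 2 + c * z ^ 2 + 2 * d * y * z + 2 * e * x * z + 2 * h * x * y
      = u ^ 2 + v ^ 2 + w ^ 2 := by
  induction m with
  | zero => intro a b c d e h h1 h2; omega
  | succ m ih =>
    intro a b c d e h h1 ha hB hdet x y z
    have hbd : (a * b - h ^ 2) * (a * c - e ^ 2) - (a * d - e * h) ^ 2 = a := by
      linear_combination a * hdet
    obtain ⟨p, q, r, s, e1, e2, e3⟩ := aux_binary (a * b - h ^ 2).toNat (a * b - h ^ 2)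
      (a * d - e * h) (a * c - e ^ 2) le_rfl hB (by omega)
    rw [hbd] at e3
    set B := (a * b - h ^ 2) * p ^ 2 + 2 * (a * d - e * h) * p * r + (a * c - e ^ 2) * r ^ 2
      with hBdef
    obtain ⟨b1, hb1⟩ : ∃ b1, b1 = b * p ^ 2 + 2 * d * p * r + c * r ^ 2 := ⟨_, rfl⟩
    obtain ⟨c1, hc1⟩ : ∃ c1, c1 = b * q ^ 2 + 2 * d * q * s + c * s ^ 2 := ⟨_, rfl⟩
    obtain ⟨d1, hd1⟩ : ∃ d1, d1 = b * p * q + d * (p * s + q * r) + c * r * s := ⟨_, rfl⟩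
    obtain ⟨h1', hh1⟩ : ∃ h1', h1' = h * p + e * r := ⟨_, rfl⟩
    obtain ⟨e1', he1⟩ : ∃ e1', e1' = h * q + e * s := ⟨_, rfl⟩
    obtain ⟨t, ht⟩ := aux_shift a h1' ha
    obtain ⟨h2, hh2⟩ : ∃ h2, h2 = h1' + t * a := ⟨_, rfl⟩
    obtain ⟨b2, hb2⟩ : ∃ b2, b2 = b1 + 2 * t * h1' + t ^ 2 * a := ⟨_, rfl⟩
    obtain ⟨d2, hd2⟩ : ∃ d2, d2 = d1 + t * e1' := ⟨_, rfl⟩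
    rw [← hh2] at ht
    have hB2 : a * b2 - h2 ^ 2 = B := by
      rw [hBdef, hb2, hh2, hb1, hh1]; ring
    have hdet1 : a * b1 * c1 + 2 * d1 * e1' * h1' - a * d1 ^ 2 - b1 * e1' ^ 2 - c1 * h1' ^ 2 = 1 := by
      have : a * b1 * c1 + 2 * d1 * e1' * h1' - a * d1 ^ 2 - b1 * e1' ^ 2 - c1 * h1' ^ 2 =
        (a * b * c + 2 * d * e * h - a * d ^ 2 - b * e ^ 2 - c * h ^ 2) * (p * s - q * r) ^ 2 := by
        rw [hb1, hc1, hd1, hh1, he1]; ring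
      rw [this, hdet, e1]; norm_num
    have hdet2 : a * b2 * c1 + 2 * d2 * e1' * h2 - a * d2 ^ 2 - b2 * e1' ^ 2 - c1 * h2 ^ 2 = 1 := by
      rw [← hdet1, hb2, hd2, hh2]; ring
    have hb2pos : 0 < b2 := by
      by_contra hneg
      have : a * b2 ≤ 0 := mul_nonpos_of_nonneg_of_nonpos ha.le (not_lt.1 hneg)
      linarith [sq_nonneg h2]
    -- new coordinates
    obtain ⟨Y, hY⟩ : ∃ Y, Y = s * y - q * z := ⟨_, rfl⟩
    obtain ⟨Z, hZ⟩ : ∃ Z, Z = p * z - r * y := ⟨_, rfl⟩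
    obtain ⟨X, hX⟩ : ∃ X, X = x - t * Y := ⟨_, rfl⟩
    have hx : x = X + t * Y := by rw [hX]; ring
    have hy : y = p * Y + q * Z := by rw [hY, hZ]; linear_combination (-y) * e1
    have hz : z = r * Y + s * Z := by rw [hY, hZ]; linear_combination (-z) * e1
    have hval : a * x ^ 2 + b * y ^ 2 + c * z ^ 2 + 2 * d * y * z + 2 * e * x * z + 2 * h * x * y =
        a * X ^ 2 + b2 * Y ^ 2 + c1 * Z ^ 2 + 2 * d2 * Y * Z + 2 * e1' * X * Z + 2 * h2 * X * Y := by
      clear hX hY hZ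
      rw [hx, hy, hz, hb2, hd2, hh2, hb1, hc1, hd1, hh1, he1]; ring
    rw [hval]
    by_cases hlt : b2 < a
    · obtain ⟨u, v, w, huvw⟩ := ih b2 a c1 e1' d2 h2 (by omega) hb2pos
        (by rw [mul_comm b2 a, hB2]; exact e2) (by rw [← hdet2]; ring) Y X Z
      exact ⟨u, v, w, by rw [← huvw]; ring⟩
    · have k0 : a * a ≤ a * b2 := mul_le_mul_of_nonneg_left (not_lt.1 hlt) ha.le
      have k1 : 3 * a ^ 2 ≤ 4 * B := by linarith [sq a]
      have ha1 : a = 1 := by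
        by_contra hne
        have ha2 : 2 ≤ a := by omega
        have k2 : (3 * a ^ 2) ^ 2 ≤ (4 * B) ^ 2 := pow_le_pow_left₀ (by positivity) k1 2
        have k3 : a * (27 * a ^ 3) ≤ a * 64 := by linarith [show a * (27 * a ^ 3) = 3 * (3 * a ^ 2) ^ 2 by ring, show (4 * B) ^ 2 = 16 * B ^ 2 by ring]
        have k4 := le_of_mul_le_mul_left k3 ha
        have k5 : (2 : ℤ) ^ 3 ≤ a ^ 3 := pow_le_pow_left₀ (by norm_num) ha2 3
        omega
      rw [ha1] at hB2 hdet2 ⊢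
      obtain ⟨u, v, huv⟩ := aux_binary_one (b2 - h2 ^ 2) (d2 - e1' * h2) (c1 - e1' ^ 2)
        (by linarith) (by rw [← hdet2]; ring) Y Z
      refine ⟨X + h2 * Y + e1' * Z, u, v, ?_⟩
      linear_combination huv

open NumberTheorySymbols in
theorem aux_three_s7 (n : ℕ) (hn : n % 8 = 3) :
    ∃ u v w : ℤ, (n : ℤ) = u ^ 2 + v ^ 2 + w ^ 2 := by
  obtain ⟨k, hk⟩ : ∃ k, n = 8 * k + 3 := ⟨n / 8, by omega⟩
  have hcop : Nat.Coprime (4 * k + 1) (4 * n) := by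
    apply Nat.Coprime.mul_right
    · have : Nat.Coprime (4 * k + 1) 4 := by
        rw [Nat.coprime_iff_gcd_eq_one, Nat.gcd_comm, Nat.gcd_rec]
        have : (4 * k + 1) % 4 = 1 := by omega
        rw [this]; rfl
      exact this
    · rw [hk, show 8 * k + 3 = 1 + 2 * (4 * k + 1) by ring]
      simp
  have : NeZero (4 * n) := ⟨by omega⟩
  obtain ⟨p, hpgt, hp, hpm⟩ := Nat.forall_exists_prime_gt_and_eq_mod
    ((ZMod.isUnit_iff_coprime (4 * k + 1) (4 * n)).2 hcop) (4 * k + 1)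
  rw [ZMod.natCast_eq_natCast_iff] at hpm
  obtain ⟨v, hv⟩ := (Nat.modEq_iff_dvd' hpgt.le).1 hpm.symm
  obtain ⟨b, hb⟩ : ∃ b, b = 8 * v + 1 := ⟨_, rfl⟩
  have hpv : p = 4 * n * v + (4 * k + 1) := by omega
  have h2p : 2 * p + 1 = b * n := by rw [hpv, hb, hk]; ring
  have hp4 : p % 4 = 1 := by
    rw [hpv, mul_assoc]; omega
  have : Fact p.Prime := ⟨hp⟩
  have hbodd : Odd b := ⟨4 * v, by omega⟩
  have hpodd : Odd p := Nat.odd_iff.2 (by omega)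
  have hJ2 : J(2 | b) = 1 := by
    rw [jacobiSym.at_two hbodd, ZMod.χ₈_nat_mod_eight]
    have : b % 8 = 1 := by omega
    rw [this]; rfl
  have hJm : J(-1 | b) = 1 := by
    rw [jacobiSym.at_neg_one hbodd, ZMod.χ₄_nat_one_mod_four (by omega)]
  have hJp : J((p : ℤ) | b) = 1 := by
    have h1 : J(2 * (p : ℤ) | b) = J(-1 | b) := by
      apply jacobiSym.mod_left'
      apply Int.ModEq.symm
      rw [Int.modEq_iff_dvd]
      refine ⟨n, ?_⟩
      have : (2 * p + 1 : ℤ) = b * n := by exact_mod_cast h2p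
      linarith
    rw [jacobiSym.mul_left, hJ2, hJm, one_mul] at h1
    exact h1
  have hJ : J(-(b : ℤ) | p) = 1 := by
    rw [jacobiSym.neg _ hpodd, ZMod.χ₄_nat_one_mod_four hp4, one_mul,
      ← jacobiSym.quadratic_reciprocity_one_mod_four hp4 hbodd, hJp]
  rw [← jacobiSym.legendreSym.to_jacobiSym] at hJ
  have hne : ((-(b : ℤ) : ℤ) : ZMod p) ≠ 0 := by
    intro h0
    rw [(legendreSym.eq_zero_iff p _).2 h0] at hJ
    exact absurd hJ (by norm_num)
  obtain ⟨r, hr⟩ := (legendreSym.eq_one_iff p hne).1 hJ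
  obtain ⟨s0, hs0⟩ := ZMod.intCast_surjective r
  have hdvd0 : (p : ℤ) ∣ s0 ^ 2 + b := by
    rw [← ZMod.intCast_zmod_eq_zero_iff_dvd]
    push_cast at hr ⊢
    rw [hs0, sq, ← hr]; ring
  obtain ⟨s, hsodd, hdvd⟩ : ∃ s : ℤ, s % 2 = 1 ∧ (p : ℤ) ∣ s ^ 2 + b := by
    rcases Int.emod_two_eq_zero_or_one s0 with h | h
    · refine ⟨s0 + p, by omega, ?_⟩
      have : (s0 + p) ^ 2 + (b : ℤ) = (s0 ^ 2 + b) + p * (2 * s0 + p) := by ring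
      rw [this]
      exact dvd_add hdvd0 (dvd_mul_right _ _)
    · exact ⟨s0, h, hdvd0⟩
  have hdvd2 : (2 : ℤ) ∣ s ^ 2 + b := by
    obtain ⟨j, hj⟩ : ∃ j, s = 2 * j + 1 := ⟨s / 2, by omega⟩
    refine ⟨2 * j ^ 2 + 2 * j + 4 * v + 1, ?_⟩
    rw [hj, hb]; push_cast; ring
  have hcop2 : IsCoprime (2 : ℤ) (p : ℤ) := by
    have : Nat.Coprime 2 p := (Nat.coprime_two_left).2 hpodd
    exact_mod_cast Nat.isCoprime_iff_coprime.2 this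
  obtain ⟨g, hg⟩ := hcop2.mul_dvd hdvd2 hdvd
  have h2pz : (2 * p + 1 : ℤ) = b * n := by exact_mod_cast h2p
  have hbpos : (0 : ℤ) < b := by omega
  have hppos : (0 : ℤ) < 2 * p := by omega
  obtain ⟨u, v', w, huvw⟩ := aux_ternary (2 * (p : ℤ)).toNat (2 * p) g n 1 0 s le_rfl hppos
    (by linarith) (by linear_combination (-(n : ℤ)) * hg - h2pz) 0 0 1
  exact ⟨u, v', w, by linarith⟩

theorem aux_sqmod (x : ℕ) : x ^ 2 % 40 ∈ ({0, 1, 4, 9, 16, 20, 24, 25, 36} : Finset ℕ) := by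
  rw [Nat.pow_mod]
  have : x % 40 < 40 := Nat.mod_lt _ (by norm_num)
  generalize x % 40 = y at *
  revert y
  decide

theorem aux_sum : ∀ a ∈ ({0, 1, 4, 9, 16, 20, 24, 25, 36} : Finset ℕ),
    ∀ b ∈ ({0, 1, 4, 9, 16, 20, 24, 25, 36} : Finset ℕ),
    ∀ c ∈ ({0, 1, 4, 9, 16, 20, 24, 25, 36} : Finset ℕ),
    (a + b + c) % 40 = 27 → a + b + c = 27 := by
  decide

theorem stmt_7 (N : ℕ) :
    ∃ A B C : ℕ, N = A ^ 2 / 40 + B ^ 2 / 40 + C ^ 2 / 40 := by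
  obtain ⟨u, v, w, h⟩ := aux_three_s7 (40 * N + 27) (by omega)
  refine ⟨u.natAbs, v.natAbs, w.natAbs, ?_⟩
  have h' : 40 * N + 27 = u.natAbs ^ 2 + v.natAbs ^ 2 + w.natAbs ^ 2 := by
    zify
    simp only [sq_abs]
    exact_mod_cast h
  have := aux_sum _ (aux_sqmod u.natAbs) _ (aux_sqmod v.natAbs) _ (aux_sqmod w.natAbs)
  generalize u.natAbs ^ 2 = a at *
  generalize v.natAbs ^ 2 = b at *
  generalize w.natAbs ^ 2 = c at *
  omega
end

section
/- For every integer k ≥ 2, every natural number N can be written as the sum of three terms of the sequence (⌊n²/2^k⌋)_{n∈ℕ}, i.e., there exist natural numbers A, B, C with N = ⌊A²/2^k⌋ + ⌊B²/2^k⌋ + ⌊C²/2^k⌋. -/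
def TState (n a b c d e f : ℤ) : Prop :=
  0 < a ∧ 0 < a * b - d ^ 2 ∧
  a * b * c + 2 * d * e * f - a * f ^ 2 - b * e ^ 2 - c * d ^ 2 = 1 ∧
  ∃ x y z : ℤ, a * x ^ 2 + b * y ^ 2 + c * z ^ 2 + 2 * d * x * y + 2 * e * x * z
    + 2 * f * y * z = n

theorem round_aux (a d : ℤ) (ha : 0 < a) : ∃ m : ℤ, -a ≤ 2 * (d + m * a) ∧ 2 * (d + m * a) ≤ a := by
  refine ⟨-((2 * d + a) / (2 * a)), ?_⟩
  have h1 := Int.emod_add_mul_ediv (2 * d + a) (2 * a)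
  have h2 := Int.emod_nonneg (2 * d + a) (show 2 * a ≠ 0 by omega)
  have h3 := Int.emod_lt_of_pos (2 * d + a) (show 0 < 2 * a by omega)
  constructor <;> nlinarith

theorem TState.shift21 {n a b c d e f : ℤ} (h : TState n a b c d e f) (m : ℤ) :
    TState n a (b + 2 * m * d + m ^ 2 * a) c (d + m * a) e (f + m * e) := by
  obtain ⟨h1, h2, h3, x, y, z, h4⟩ := h
  refine ⟨h1, ?_, ?_, x - m * y, y, z, ?_⟩
  · linarith
  · rw [← h3]; ring
  · rw [← h4]; ring

theorem TState.shift32 {n a b c d e f : ℤ} (h : TState n a b c d e f) (m : ℤ) :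
    TState n a b (c + 2 * m * f + m ^ 2 * b) d (e + m * d) (f + m * b) := by
  obtain ⟨h1, h2, h3, x, y, z, h4⟩ := h
  refine ⟨h1, h2, ?_, x, y - m * z, z, ?_⟩
  · rw [← h3]; ring
  · rw [← h4]; ring

theorem TState.swap12 {n a b c d e f : ℤ} (h : TState n a b c d e f) :
    0 < b ∧ TState n b a c d f e := by
  obtain ⟨h1, h2, h3, x, y, z, h4⟩ := h
  have hb : 0 < b := by
    by_contra hb
    nlinarith [sq_nonneg d]
  refine ⟨hb, hb, by linarith, ?_, y, x, z, ?_⟩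
  · rw [← h3]; ring
  · rw [← h4]; ring

theorem TState.ident {n a b c d e f : ℤ} (h : TState n a b c d e f) :
    (a * b - d ^ 2) * (a * c - e ^ 2) = (a * f - d * e) ^ 2 + a := by
  obtain ⟨h1, h2, h3, -⟩ := h
  linear_combination a * h3

theorem TState.swap23 {n a b c d e f : ℤ} (h : TState n a b c d e f) :
    0 < a * c - e ^ 2 ∧ TState n a c b e d f := by
  have hi := h.ident
  obtain ⟨h1, h2, h3, x, y, z, h4⟩ := h
  have hb : 0 < a * c - e ^ 2 := by
    by_contra hb
    nlinarith [sq_nonneg (a * f - d * e)]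
  refine ⟨hb, h1, hb, ?_, x, z, y, ?_⟩
  · rw [← h3]; ring
  · rw [← h4]; ring

theorem TState.main (n : ℤ) (A : ℕ) : ∀ (C : ℕ) (a b c d e f : ℤ), TState n a b c d e f →
    a = A → a * b - d ^ 2 = C → ∃ x y z : ℤ, x ^ 2 + y ^ 2 + z ^ 2 = n := by
  induction A using Nat.strong_induction_on with
  | _ A ihA =>
  intro C
  induction C using Nat.strong_induction_on with
  | _ C ihC =>
  intro a b c d e f h hA hC
  obtain ⟨m, hm1, hm2⟩ := round_aux a d h.1
  have h' := h.shift21 m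
  have hC' : a * (b + 2 * m * d + m ^ 2 * a) - (d + m * a) ^ 2 = C := by rw [← hC]; ring
  generalize b + 2 * m * d + m ^ 2 * a = b' at *
  generalize d + m * a = d' at *
  generalize f + m * e = f' at *
  clear h hC
  by_cases hba : b' < a
  · obtain ⟨hb, hs⟩ := h'.swap12
    exact ihA b'.toNat (by omega) (b' * a - d' ^ 2).toNat _ _ _ _ _ _ hs (by omega)
      (by have := hs.2.1; omega)
  push Not at hba
  obtain ⟨l, hl1, hl2⟩ := round_aux (a * b' - d' ^ 2) (a * f' - d' * e) h'.2.1
  have h2 := h'.shift32 l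
  have hH : (a * f' - d' * e) + l * (a * b' - d' ^ 2)
     = a * (f' + l * b') - d' * (e + l * d') := by ring
  rw [hH] at hl1 hl2
  generalize c + 2 * l * f' + l ^ 2 * b' = c2 at *
  generalize e + l * d' = e2 at *
  generalize f' + l * b' = f2 at *
  clear hH h'
  obtain ⟨hK, hs⟩ := h2.swap23
  by_cases hKC : a * c2 - e2 ^ 2 < C
  · exact ihC (a * c2 - e2 ^ 2).toNat (by omega) _ _ _ _ _ _ hs hA (by omega)
  push Not at hKC
  have hi := h2.ident
  obtain ⟨ha, hCpos, hdet, x, y, z, hn⟩ := h2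
  clear ihA ihC hs
  rw [hC'] at hi hl1 hl2 hCpos
  generalize hCC : (C : ℤ) = D at *
  have e1 : 3 * a ^ 2 ≤ 4 * D := by nlinarith
  have e2' : 3 * D ^ 2 ≤ 4 * a := by
    generalize a * f2 - d' * e2 = H at *
    nlinarith
  have hD : D = 1 := by
    by_contra hne
    have : 2 ≤ D := by omega
    have : D < a := by nlinarith
    nlinarith
  subst hD
  have ha1 : a = 1 := by
    by_contra hne
    have : 2 ≤ a := by omega
    nlinarith
  subst ha1
  have hd : d' = 0 := by omega
  subst hd
  have hb : b' = 1 := by linarith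
  have hf : f2 = 0 := by
    have : 1 * f2 - 0 * e2 = f2 := by ring
    rw [this] at hl1 hl2; omega
  subst hb hf
  refine ⟨x + e2 * z, y, z, ?_⟩
  rw [← hn]
  linear_combination (-z ^ 2) * hdet

theorem three_sq_of (n d p x y : ℤ) (hd : 0 < d) (hp : 0 < p) (hdp : d * n - 1 = p)
    (h : x ^ 2 + d = p * y) : ∃ x y z : ℤ, x ^ 2 + y ^ 2 + z ^ 2 = n := by
  have hy : 0 < y := by
    by_contra hy
    nlinarith [sq_nonneg x]
  have hpos : 0 < y * p - x ^ 2 := by linarith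
  have hs : TState n y p n x 1 0 := by
    refine ⟨hy, hpos, ?_, 0, 0, 1, by ring⟩
    linear_combination (-n) * h + hdp
  exact TState.main n y.toNat (y * p - x ^ 2).toNat _ _ _ _ _ _ hs (by omega) (by omega)

theorem three_sq_two_mod_four (t : ℕ) : ∃ x y z : ℤ, x ^ 2 + y ^ 2 + z ^ 2 = 4 * t + 2 := by
  have hcop : Nat.Coprime (4 * t + 1) (4 * (4 * t + 2)) := by
    have h1 : Nat.Coprime (4 * t + 1) 4 := by
      rw [show 4 * t + 1 = 1 + 4 * t by ring]; simp
    have h2 : Nat.Coprime (4 * t + 1) (4 * t + 2) := by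
      rw [show 4 * t + 2 = (4 * t + 1) + 1 by ring]; simp
    exact h1.mul_right h2
  obtain ⟨p, hpgt, hp, hpm⟩ := Nat.forall_exists_prime_gt_and_eq_mod
    (q := 4 * (4 * t + 2)) (a := ((4 * t + 1 : ℕ) : ZMod _))
    ((ZMod.isUnit_iff_coprime _ _).2 hcop) (4 * t + 1)
  rw [ZMod.natCast_eq_natCast_iff] at hpm
  obtain ⟨j, hj⟩ := (Nat.modEq_iff_dvd' hpgt.le).1 hpm.symm
  have hpj : p + 1 = (4 * j + 1) * (4 * t + 2) := by
    have : p = 4 * (4 * t + 2) * j + (4 * t + 1) := by omega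
    rw [this]; ring
  haveI := Fact.mk hp
  have hp4 : p % 4 = 1 := by
    have : p + 1 = 4 * (j * (4 * t + 2)) + 4 * t + 2 := by rw [hpj]; ring
    omega
  have hpodd : Odd p := by rw [Nat.odd_iff]; omega
  have hj1 : jacobiSym (-((4 * j + 1 : ℕ) : ℤ)) p = 1 := by
    rw [jacobiSym.neg _ hpodd, ZMod.χ₄_nat_one_mod_four hp4, one_mul]
    rw [jacobiSym.quadratic_reciprocity_one_mod_four (by omega) hpodd]
    have hm : (p : ℤ) % ((4 * j + 1 : ℕ) : ℤ) = (-1) % ((4 * j + 1 : ℕ) : ℤ) := by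
      apply Int.ModEq.symm
      rw [Int.modEq_iff_dvd]
      refine ⟨4 * t + 2, ?_⟩
      have : (p : ℤ) + 1 = (4 * j + 1) * (4 * t + 2) := by exact_mod_cast hpj
      push_cast; linarith
    rw [jacobiSym.mod_left, hm, ← jacobiSym.mod_left,
      jacobiSym.at_neg_one (by rw [Nat.odd_iff]; omega), ZMod.χ₄_nat_one_mod_four (by omega)]
  rw [← jacobiSym.legendreSym.to_jacobiSym] at hj1
  have hne : ((-((4 * j + 1 : ℕ) : ℤ) : ℤ) : ZMod p) ≠ 0 := by
    intro h0
    rw [(legendreSym.eq_zero_iff p _).2 h0] at hj1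
    exact absurd hj1 (by norm_num)
  obtain ⟨r, hr⟩ := (legendreSym.eq_one_iff p hne).1 hj1
  have hdvd : (p : ℤ) ∣ (r.val : ℤ) ^ 2 + (4 * j + 1) := by
    rw [← ZMod.intCast_zmod_eq_zero_iff_dvd]
    push_cast at hr ⊢
    rw [ZMod.natCast_zmod_val]
    linear_combination -hr
  obtain ⟨y, hy⟩ := hdvd
  have hpz : (p : ℤ) + 1 = (4 * j + 1) * (4 * t + 2) := by exact_mod_cast hpj
  exact three_sq_of _ (4 * j + 1) p r.val y (by positivity) (by exact_mod_cast hp.pos)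
    (by linarith) hy

theorem sq_mod8 (a : ℕ) : a ^ 2 % 8 = 0 ∨ a ^ 2 % 8 = 1 ∨ a ^ 2 % 8 = 4 := by
  have h : a % 8 < 8 := Nat.mod_lt _ (by norm_num)
  rw [Nat.pow_mod]
  interval_cases a % 8 <;> simp

theorem three_sq_nat_s11 (t : ℕ) : ∃ x y z : ℕ, x ^ 2 + y ^ 2 + z ^ 2 = 4 * t + 2 := by
  obtain ⟨x, y, z, h⟩ := three_sq_two_mod_four t
  refine ⟨x.natAbs, y.natAbs, z.natAbs, ?_⟩
  zify
  simpa using h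

theorem stmt_11 (k : ℕ) (hk : 2 ≤ k) (N : ℕ) :
    ∃ A B C : ℕ, N = A ^ 2 / 2 ^ k + B ^ 2 / 2 ^ k + C ^ 2 / 2 ^ k := by
  induction k using Nat.strong_induction_on with
  | _ k ih =>
  by_cases h4 : 4 ≤ k
  · obtain ⟨A, B, C, h⟩ := ih (k - 2) (by omega) (by omega)
    refine ⟨2 * A, 2 * B, 2 * C, ?_⟩
    have key : ∀ X : ℕ, (2 * X) ^ 2 / 2 ^ k = X ^ 2 / 2 ^ (k - 2) := by
      intro X
      have : 2 ^ k = 4 * 2 ^ (k - 2) := by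
        rw [show (4 : ℕ) = 2 ^ 2 by norm_num, ← pow_add]; congr 1; omega
      rw [this, mul_pow, show 2 ^ 2 = 4 by norm_num]
      exact Nat.mul_div_mul_left _ _ (by norm_num)
    rw [key, key, key]; exact h
  · have : k = 2 ∨ k = 3 := by omega
    rcases this with rfl | rfl
    · obtain ⟨x, y, z, h⟩ := three_sq_nat_s11 N
      refine ⟨x, y, z, ?_⟩
      have := sq_mod8 x
      have := sq_mod8 y
      have := sq_mod8 z
      norm_num only
      omega
    · obtain ⟨x, y, z, h⟩ := three_sq_nat_s11 (2 * N)
      refine ⟨x, y, z, ?_⟩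
      have := sq_mod8 x
      have := sq_mod8 y
      have := sq_mod8 z
      norm_num only
      omega
end
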